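/- Let β ∈ (0,1), let Ω = [0,1] with the standard metric, let μ be the probability measure on [0,1] with density proportional to |x − 1/2|^{(β−1)/2} with respect to Lebesgue measure, and let f(x) = 1[x > 1/2]. Then: (i) Λ̄_f^β(μ) < ∞ (f is average-β-Hölder with respect to μ); (ii) sup_{x∈[0,1]} Λ_f^β(x) = ∞ (f is not β-Hölder with any finite constant); and (iii) Λ̃_f^1(μ) = ∞ (f is not weakly-average-Lipschitz with any finite modulus). -/

import Mathlib

open MeasureTheory Set Metric
open scoped ENNReal NNReal

noncomputable section

/-- The `β`-hslope of `f` at `x`: `Λ_f^β(x) = sup_{y ≠ x} |f x - f y| / ρ(x,y)^β`. -/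
def hslope {Ω : Type*} [MetricSpace Ω] (β : ℝ) (f : Ω → ℝ) (x : Ω) : ℝ≥0∞ :=
  ⨆ (y : Ω) (_ : y ≠ x), ENNReal.ofReal (|f x - f y| / dist x y ^ β)

/-- The average `β`-hslope of `f` with respect to `μ`: `E_{X∼μ}[Λ_f^β(X)]`. -/
def avgSlope {Ω : Type*} [MetricSpace Ω] [MeasurableSpace Ω] (μ : Measure Ω) (β : ℝ)
    (f : Ω → ℝ) : ℝ≥0∞ :=
  ∫⁻ x, hslope β f x ∂μ

/-- The weak average `β`-hslope of `f` with respect to `μ`: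
`sup_{t>0} t · μ {x : Λ_f^β(x) ≥ t}`. -/
def weakAvgSlope {Ω : Type*} [MetricSpace Ω] [MeasurableSpace Ω] (μ : Measure Ω) (β : ℝ)
    (f : Ω → ℝ) : ℝ≥0∞ :=
  ⨆ (t : ℝ) (_ : 0 < t), ENNReal.ofReal t * μ {x | ENNReal.ofReal t ≤ hslope β f x}

/-- The class `H̄öl^β_L(Ω,μ)` of measurable `[0,1]`-valued functions with average
`β`-hslope at most `L`. -/
def avgHolderClass {Ω : Type*} [MetricSpace Ω] [MeasurableSpace Ω] (μ : Measure Ω)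
    (β L : ℝ) : Set (Ω → ℝ) :=
  {f | Measurable f ∧ (∀ x, f x ∈ Icc (0:ℝ) 1) ∧ avgSlope μ β f ≤ ENNReal.ofReal L}

/-- The class `H̃öl^β_L(Ω,μ)` of measurable `[0,1]`-valued functions with weak average
`β`-hslope at most `L`. -/
def weakHolderClass {Ω : Type*} [MetricSpace Ω] [MeasurableSpace Ω] (μ : Measure Ω)
    (β L : ℝ) : Set (Ω → ℝ) :=
  {f | Measurable f ∧ (∀ x, f x ∈ Icc (0:ℝ) 1) ∧ weakAvgSlope μ β f ≤ ENNReal.ofReal L}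

/-- The covering number `N_Ω(t)`: minimal cardinality of a set of points whose closed
`t`-balls cover `Ω` (`∞` if no finite cover exists). -/
def coveringNumber (Ω : Type*) [MetricSpace Ω] (t : ℝ) : ℝ≥0∞ :=
  ⨅ (A : Finset Ω) (_ : ∀ x : Ω, ∃ a ∈ A, dist x a ≤ t), (A.card : ℝ≥0∞)

/-- `B` is a finite set of `ε`-brackets (with respect to `L1(μ)`) covering `F`. -/
def IsBracketing {Ω : Type*} [MeasurableSpace Ω] (μ : Measure Ω) (F : Set (Ω → ℝ))
    (ε : ℝ) (B : Finset ((Ω → ℝ) × (Ω → ℝ))) : Prop :=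
  (∀ lu ∈ B, (∀ x, lu.1 x ∈ Icc (0:ℝ) 1 ∧ lu.2 x ∈ Icc (0:ℝ) 1) ∧
      ∫⁻ x, ENNReal.ofReal |lu.2 x - lu.1 x| ∂μ ≤ ENNReal.ofReal ε) ∧
    ∀ f ∈ F, ∃ lu ∈ B, ∀ x, lu.1 x ≤ f x ∧ f x ≤ lu.2 x

/-- The bracketing number `N_[](F, L1(μ), ε)`. -/
def bracketingNumber {Ω : Type*} [MetricSpace Ω] [MeasurableSpace Ω] (F : Set (Ω → ℝ))
    (μ : Measure Ω) (ε : ℝ) : ℝ≥0∞ :=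
  ⨅ (B : Finset ((Ω → ℝ) × (Ω → ℝ))) (_ : IsBracketing μ F ε B), (B.card : ℝ≥0∞)

/-- Logarithm of an extended-real cardinality: equals `log N` for finite natural `N`
and `∞` when `N = ∞`. -/
def elog (N : ℝ≥0∞) : ℝ≥0∞ :=
  ⨅ (m : ℕ) (_ : N ≤ (m : ℝ≥0∞)), ENNReal.ofReal (Real.log m)

/-- The `L1` risk `L_D(f) = E_{(X,Y)∼D} |f(X) − Y|`. -/
def risk {Ω : Type*} [MetricSpace Ω] [MeasurableSpace Ω] (D : Measure (Ω × ℝ))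
    (f : Ω → ℝ) : ℝ≥0∞ :=
  ∫⁻ p, ENNReal.ofReal |f p.1 - p.2| ∂D

/-- The empirical `L1` risk `L_S(f) = (1/n) Σ_i |f(X_i) − Y_i|`. -/
def empRisk {Ω : Type*} [MetricSpace Ω] {n : ℕ} (S : Fin n → Ω × ℝ) (f : Ω → ℝ) : ℝ :=
  (n : ℝ)⁻¹ * ∑ i, |f (S i).1 - (S i).2|

/-- `D` is realizable by the class `F`. -/
def Realizable {Ω : Type*} [MetricSpace Ω] [MeasurableSpace Ω] (D : Measure (Ω × ℝ))
    (F : Set (Ω → ℝ)) : Prop :=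
  ∃ f ∈ F, risk D f = 0

/-- The empirical average `β`-hslope of `f` over the sample points `X_1,…,X_n`. -/
def empAvgSlope {Ω : Type*} [MetricSpace Ω] (β : ℝ) {n : ℕ} (X : Fin n → Ω)
    (f : Ω → ℝ) : ℝ :=
  (n : ℝ)⁻¹ * ∑ i, ⨆ (j : Fin n) (_ : X j ≠ X i), |f (X i) - f (X j)| / dist (X i) (X j) ^ β

/-!
Let `c ∈ Ω ⊆ ℝ`, `Ω` bounded, with the measure `|x - c|^a dx`. The unit jump at `c` has `γ`-slope at
most `|x - c|^(-γ)` at `x`, with equality to the right of `c`. Hence its average `γ`-slope is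
bounded by the total mass of `|x - c|^(a - γ) dx`, which is finite for `γ < a + 1`. Conversely the
`γ`-slope is at least `t = r^(-γ)` on `(c, c + r]`, a set of mass `r^(a + 1) / (a + 1)`, and
`t * r^(a + 1) = r^(a + 1 - γ)` blows up as `r → 0` once `γ > a + 1`. The exponent
`a = (β - 1) / 2` puts the threshold `a + 1` at the midpoint of `β` and `1`.
-/

section Slope

variable {Ω : Type*} [MetricSpace Ω] {f : Ω → ℝ} {x : Ω} {γ r : ℝ}

theorem ofReal_div_rpow_le_hslope {y : Ω} {δ : ℝ} (hγ : 0 ≤ γ) (hδ : 0 < δ)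
    (hf : δ ≤ |f x - f y|) (hr : dist x y ≤ r) : ENNReal.ofReal (δ / r ^ γ) ≤ hslope γ f x := by
  have hne : y ≠ x := by
    rintro rfl
    exact hδ.not_ge (by simpa using hf)
  have hdist : 0 < dist x y := dist_pos.2 hne.symm
  calc ENNReal.ofReal (δ / r ^ γ)
      ≤ ENNReal.ofReal (|f x - f y| / dist x y ^ γ) := by gcongr
    _ ≤ hslope γ f x :=
        le_iSup₂ (f := fun z (_ : z ≠ x) ↦ ENNReal.ofReal (|f x - f z| / dist x z ^ γ)) y hne

theorem hslope_le_ofReal_div_rpow {M : ℝ} (hγ : 0 ≤ γ) (hr : 0 < r)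
    (hf : ∀ y, |f x - f y| ≤ M) (hdist : ∀ y, f y ≠ f x → r ≤ dist x y) :
    hslope γ f x ≤ ENNReal.ofReal (M / r ^ γ) := by
  have hM : 0 ≤ M := (abs_nonneg _).trans (hf x)
  refine iSup₂_le fun y _ ↦ ENNReal.ofReal_le_ofReal ?_
  rcases eq_or_ne (f y) (f x) with heq | hne
  · rw [heq, sub_self, abs_zero, zero_div]
    positivity
  · gcongr
    exacts [hf y, hdist y hne]

variable [MeasurableSpace Ω]

theorem avgSlope_smul (k : ℝ≥0∞) (μ : Measure Ω) (γ : ℝ) (f : Ω → ℝ) :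
    avgSlope (k • μ) γ f = k * avgSlope μ γ f :=
  lintegral_smul_measure k _

theorem weakAvgSlope_smul (k : ℝ≥0∞) (μ : Measure Ω) (γ : ℝ) (f : Ω → ℝ) :
    weakAvgSlope (k • μ) γ f = k * weakAvgSlope μ γ f := by
  simp only [weakAvgSlope, Measure.smul_apply, smul_eq_mul, ENNReal.mul_iSup, mul_left_comm k]

theorem ofReal_mul_measure_le_weakAvgSlope (μ : Measure Ω) (γ : ℝ) (f : Ω → ℝ) {t : ℝ}
    (ht : 0 < t) :
    ENNReal.ofReal t * μ {x | ENNReal.ofReal t ≤ hslope γ f x} ≤ weakAvgSlope μ γ f :=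
  le_iSup₂ (f := fun t (_ : 0 < t) ↦ ENNReal.ofReal t * μ {x | ENNReal.ofReal t ≤ hslope γ f x})
    t ht

end Slope

section UnitStep

/-- The indicator `1[z > c]` of the points of `s ⊆ ℝ` to the right of `c`, as a function on the
subtype `s`: the model of a discontinuous function. -/
def unitStep (s : Set ℝ) (c : ℝ) (z : s) : ℝ := if c < z then 1 else 0

variable {s : Set ℝ} {c γ r : ℝ} {x y : s}

theorem abs_unitStep_sub_unitStep_le_one (x y : s) : |unitStep s c x - unitStep s c y| ≤ 1 := by
  unfold unitStep
  split_ifs <;> norm_num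

theorem mem_uIcc_of_unitStep_ne (h : unitStep s c y ≠ unitStep s c x) :
    c ∈ uIcc (x : ℝ) y := by
  unfold unitStep at h
  grind [mem_uIcc]

theorem abs_sub_le_dist_of_unitStep_ne (h : unitStep s c y ≠ unitStep s c x) :
    |(x : ℝ) - c| ≤ dist x y :=
  Real.dist_left_le_of_mem_uIcc (mem_uIcc_of_unitStep_ne h)

theorem hslope_unitStep_le (hγ : 0 ≤ γ) (hx : (x : ℝ) ≠ c) :
    hslope γ (unitStep s c) x ≤ ENNReal.ofReal (|(x : ℝ) - c| ^ (-γ)) := by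
  rw [Real.rpow_neg (abs_nonneg _), ← one_div]
  exact hslope_le_ofReal_div_rpow hγ (abs_sub_pos.2 hx) (abs_unitStep_sub_unitStep_le_one x)
    fun _ ↦ abs_sub_le_dist_of_unitStep_ne

theorem ofReal_rpow_neg_le_hslope_unitStep (hγ : 0 ≤ γ) (hc : c ∈ s)
    (hx : (x : ℝ) ∈ Ioc c (c + r)) :
    ENNReal.ofReal (r ^ (-γ)) ≤ hslope γ (unitStep s c) x := by
  have hdist : dist x ⟨c, hc⟩ ≤ r := by
    rw [Subtype.dist_eq, Real.dist_eq, abs_of_pos (sub_pos.2 hx.1)]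
    linarith [hx.2]
  rw [Real.rpow_neg (dist_nonneg.trans hdist), ← one_div]
  exact ofReal_div_rpow_le_hslope hγ one_pos (by simp [unitStep, hx.1]) hdist

end UnitStep

section PowerWeight

variable {s : Set ℝ} {c a : ℝ}

theorem intervalIntegrable_abs_sub_rpow (ha : -1 < a) (c u v : ℝ) :
    IntervalIntegrable (fun x ↦ |x - c| ^ a) volume u v := by
  have hloc : LocallyIntegrable (fun x : ℝ ↦ |x| ^ a) := by
    have hrank : -a < (Module.finrank ℝ ℝ : ℝ) := by
      rw [Module.finrank_self, Nat.cast_one]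
      linarith
    refine locallyIntegrable_of_norm_le_rpow (C := 1) (by simp) hrank (ae_of_all _ fun x ↦ ?_)
      (measurable_abs.pow_const a).aestronglyMeasurable
    simp [Real.abs_rpow_of_nonneg]
  have hint : IntervalIntegrable (fun x : ℝ ↦ |x| ^ a) volume (u - c) (v - c) :=
    (hloc.integrableOn_isCompact isCompact_uIcc).intervalIntegrable
  simpa using hint.comp_sub_right c

theorem lintegral_Ioc_abs_sub_rpow (ha : -1 < a) (c : ℝ) {r : ℝ} (hr : 0 ≤ r) :
    ∫⁻ x in Ioc c (c + r), ENNReal.ofReal (|x - c| ^ a) =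
      ENNReal.ofReal (r ^ (a + 1) / (a + 1)) := by
  have hle : c ≤ c + r := by linarith
  have hint := intervalIntegrable_abs_sub_rpow ha c c (c + r)
  rw [intervalIntegrable_iff_integrableOn_Ioc_of_le hle] at hint
  rw [← ofReal_integral_eq_lintegral_ofReal hint (ae_of_all _ fun x ↦ by positivity),
    ← intervalIntegral.integral_of_le hle]
  congr 1
  calc ∫ x in c..(c + r), |x - c| ^ a
      = ∫ x in (0 : ℝ)..r, |x| ^ a := by
        simpa using intervalIntegral.integral_comp_sub_right (a := c) (b := c + r) (|·| ^ a) c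
    _ = ∫ x in (0 : ℝ)..r, x ^ a := by
        refine intervalIntegral.integral_congr fun x hx ↦ ?_
        rw [uIcc_of_le hr] at hx
        simp only [abs_of_nonneg hx.1]
    _ = r ^ (a + 1) / (a + 1) := by
        rw [integral_rpow (.inl ha), Real.zero_rpow (by linarith), sub_zero]

/-- The measure `|z - c|^a dz` on the subtype `s ⊆ ℝ`, not normalized: the family of
weights singular at the jump of `unitStep s c`. For `a < 0` the density takes the junk value `0`
at `c`, a null set. -/
def powerWeight (s : Set ℝ) (c a : ℝ) : Measure s :=
  ((volume : Measure ℝ).comap Subtype.val).withDensity fun z ↦ ENNReal.ofReal (|(z : ℝ) - c| ^ a)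

theorem powerWeight_preimage (hs : MeasurableSet s) {t : Set ℝ} (ht : MeasurableSet t)
    (hts : t ⊆ s) :
    powerWeight s c a (Subtype.val ⁻¹' t) = ∫⁻ x in t, ENNReal.ofReal (|x - c| ^ a) := by
  rw [powerWeight, withDensity_apply _ (measurable_subtype_coe ht),
    (measurePreserving_subtype_coe hs).setLIntegral_comp_preimage_emb
      (.subtype_coe hs) (fun x ↦ ENNReal.ofReal (|x - c| ^ a)),
    Measure.restrict_restrict ht, inter_eq_left.2 hts]

theorem powerWeight_preimage_Ioc (hs : MeasurableSet s) (ha : -1 < a) {r : ℝ} (hr : 0 ≤ r)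
    (hrs : Ioc c (c + r) ⊆ s) :
    powerWeight s c a (Subtype.val ⁻¹' Ioc c (c + r)) =
      ENNReal.ofReal (r ^ (a + 1) / (a + 1)) :=
  (powerWeight_preimage hs measurableSet_Ioc hrs).trans (lintegral_Ioc_abs_sub_rpow ha c hr)

theorem isFiniteMeasure_powerWeight (hs : MeasurableSet s) (hb : Bornology.IsBounded s)
    (ha : -1 < a) : IsFiniteMeasure (powerWeight s c a) := by
  have hint : IntegrableOn (fun x ↦ |x - c| ^ a) s :=
    ((intervalIntegrable_iff' (by simp)).1
      (intervalIntegrable_abs_sub_rpow ha c (sInf s) (sSup s))).mono_set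
      (hb.subset_Icc_sInf_sSup.trans Icc_subset_uIcc)
  exact isFiniteMeasure_withDensity_ofReal
    ((measurePreserving_subtype_coe hs).integrable_comp_emb (.subtype_coe hs) |>.2 hint).2

theorem avgSlope_powerWeight_unitStep_le (hs : MeasurableSet s) {γ : ℝ} (hγ : 0 ≤ γ) :
    avgSlope (powerWeight s c a) γ (unitStep s c) ≤ powerWeight s c (a - γ) univ := by
  have hne : ∀ᵐ z : s ∂(volume : Measure ℝ).comap Subtype.val, (z : ℝ) ≠ c :=
    (measurePreserving_subtype_coe hs).quasiMeasurePreserving.ae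
      (ae_restrict_of_ae (Measure.ae_ne volume c))
  rw [avgSlope, powerWeight, powerWeight, withDensity_apply _ .univ, Measure.restrict_univ]
  refine (lintegral_withDensity_le_lintegral_mul _ (by fun_prop) _).trans
    (lintegral_mono_ae (hne.mono fun z hz ↦ ?_))
  calc ENNReal.ofReal (|(z : ℝ) - c| ^ a) * hslope γ (unitStep s c) z
      ≤ ENNReal.ofReal (|(z : ℝ) - c| ^ a) * ENNReal.ofReal (|(z : ℝ) - c| ^ (-γ)) := by
        gcongr
        exact hslope_unitStep_le hγ hz
    _ = ENNReal.ofReal (|(z : ℝ) - c| ^ (a - γ)) := by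
        rw [← ENNReal.ofReal_mul (by positivity), ← Real.rpow_add (abs_sub_pos.2 hz),
          ← sub_eq_add_neg]

theorem avgSlope_powerWeight_unitStep_ne_top (hs : MeasurableSet s) (hb : Bornology.IsBounded s)
    {γ : ℝ} (hγ : 0 ≤ γ) (hγa : γ < a + 1) :
    avgSlope (powerWeight s c a) γ (unitStep s c) ≠ ⊤ :=
  have := isFiniteMeasure_powerWeight (c := c) (a := a - γ) hs hb (by linarith)
  ne_top_of_le_ne_top (measure_ne_top _ _) (avgSlope_powerWeight_unitStep_le hs hγ)

end PowerWeight

section BlowUp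

open Filter Topology

variable {s : Set ℝ} {c a γ : ℝ}

theorem eventually_Icc_add_subset (hsc : s ∈ 𝓝[≥] c) :
    ∀ᶠ r in 𝓝[>] (0 : ℝ), Icc c (c + r) ⊆ s := by
  obtain ⟨u, hu, hus⟩ := mem_nhdsGE_iff_exists_Icc_subset.1 hsc
  filter_upwards [Ioc_mem_nhdsGT (sub_pos.2 hu)] with r hr
  exact (Icc_subset_Icc_right (by linarith [hr.2])).trans hus

theorem powerWeight_ne_zero (hs : MeasurableSet s) (hsc : s ∈ 𝓝[≥] c) (ha : -1 < a) :
    powerWeight s c a ≠ 0 := by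
  intro hzero
  obtain ⟨r, hrs, hr : 0 < r⟩ :=
    ((eventually_Icc_add_subset hsc).and self_mem_nhdsWithin).exists
  have hmass := powerWeight_preimage_Ioc hs ha hr.le (Ioc_subset_Icc_self.trans hrs)
  rw [hzero, Measure.coe_zero, Pi.zero_apply, eq_comm, ENNReal.ofReal_eq_zero] at hmass
  have hpos : 0 < r ^ (a + 1) / (a + 1) := div_pos (by positivity) (by linarith)
  exact hpos.not_ge hmass

theorem iSup_hslope_unitStep_eq_top (hsc : s ∈ 𝓝[≥] c) (hγ : 0 < γ) :
    ⨆ x, hslope γ (unitStep s c) x = ⊤ := by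
  have hlim : Tendsto (fun r : ℝ ↦ ENNReal.ofReal (r ^ (-γ))) (𝓝[>] 0) (𝓝 ⊤) :=
    ENNReal.tendsto_ofReal_atTop.comp (tendsto_rpow_neg_nhdsGT_zero (neg_neg_of_pos hγ))
  refine top_le_iff.1 (le_of_tendsto hlim ?_)
  filter_upwards [self_mem_nhdsWithin, eventually_Icc_add_subset hsc] with r (hr : 0 < r) hrs
  exact (ofReal_rpow_neg_le_hslope_unitStep hγ.le (mem_of_mem_nhdsWithin self_mem_Ici hsc)
    ⟨by simpa using hr, le_rfl⟩).trans
    (le_iSup (hslope γ (unitStep s c)) ⟨c + r, hrs (right_mem_Icc.2 (by linarith))⟩)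

theorem weakAvgSlope_powerWeight_unitStep_eq_top (hs : MeasurableSet s) (hsc : s ∈ 𝓝[≥] c)
    (ha : -1 < a) (hγa : a + 1 < γ) :
    weakAvgSlope (powerWeight s c a) γ (unitStep s c) = ⊤ := by
  have ha' : 0 < a + 1 := by linarith
  have hlim : Tendsto (fun r : ℝ ↦ ENNReal.ofReal (r ^ (a + 1 - γ) / (a + 1))) (𝓝[>] 0) (𝓝 ⊤) :=
    ENNReal.tendsto_ofReal_atTop.comp
      ((tendsto_rpow_neg_nhdsGT_zero (by linarith)).atTop_div_const ha')
  refine top_le_iff.1 (le_of_tendsto hlim ?_)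
  filter_upwards [self_mem_nhdsWithin, eventually_Icc_add_subset hsc] with r (hr : 0 < r) hrs
  have hslope_ge : (Subtype.val ⁻¹' Ioc c (c + r) : Set s) ⊆
      {x | ENNReal.ofReal (r ^ (-γ)) ≤ hslope γ (unitStep s c) x} := fun x hx ↦
    ofReal_rpow_neg_le_hslope_unitStep (by linarith) (mem_of_mem_nhdsWithin self_mem_Ici hsc) hx
  calc ENNReal.ofReal (r ^ (a + 1 - γ) / (a + 1))
      = ENNReal.ofReal (r ^ (-γ)) * powerWeight s c a (Subtype.val ⁻¹' Ioc c (c + r)) := by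
        rw [powerWeight_preimage_Ioc hs ha hr.le (Ioc_subset_Icc_self.trans hrs),
          ← ENNReal.ofReal_mul (by positivity), ← mul_div_assoc, ← Real.rpow_add hr, neg_add_eq_sub]
    _ ≤ ENNReal.ofReal (r ^ (-γ)) *
          powerWeight s c a {x | ENNReal.ofReal (r ^ (-γ)) ≤ hslope γ (unitStep s c) x} := by
        gcongr
    _ ≤ weakAvgSlope (powerWeight s c a) γ (unitStep s c) :=
        ofReal_mul_measure_le_weakAvgSlope _ _ _ (by positivity)

end BlowUp

/-- Claim: a function that is average-β-Hölder but neither β-Hölder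
nor weakly-average-Lipschitz. -/
theorem avg_holder_not_holder_not_weak_lip
    (β : ℝ) (hβ0 : 0 < β) (hβ1 : β < 1)
    (f : (Set.Icc (0:ℝ) 1) → ℝ)
    (hfdef : ∀ z, f z = if 1 / 2 < (z : ℝ) then 1 else 0)
    (ν : Measure (Set.Icc (0:ℝ) 1))
    (hν : ν = ((volume : Measure ℝ).comap Subtype.val).withDensity
      fun z => ENNReal.ofReal (|(z : ℝ) - 1 / 2| ^ ((β - 1) / 2)))
    (μ : Measure (Set.Icc (0:ℝ) 1)) (hμ : μ = (ν Set.univ)⁻¹ • ν) :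
    IsProbabilityMeasure μ ∧
    avgSlope μ β f ≠ ⊤ ∧
    (⨆ x : (Set.Icc (0:ℝ) 1), hslope β f x) = ⊤ ∧
    weakAvgSlope μ 1 f = ⊤ := by
  obtain rfl : f = unitStep (Icc 0 1) (1 / 2) := funext hfdef
  replace hν : ν = powerWeight (Icc 0 1) (1 / 2) ((β - 1) / 2) := hν
  subst hν hμ
  have hs : MeasurableSet (Icc (0 : ℝ) 1) := measurableSet_Icc
  have hb : Bornology.IsBounded (Icc (0 : ℝ) 1) := isBounded_Icc 0 1
  have hsc : Icc (0 : ℝ) 1 ∈ nhdsWithin (1 / 2) (Ici (1 / 2)) :=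
    mem_nhdsWithin_of_mem_nhds (Icc_mem_nhds (by norm_num) (by norm_num))
  have ha : -1 < (β - 1) / 2 := by linarith
  have := isFiniteMeasure_powerWeight (c := 1 / 2) hs hb ha
  have : NeZero (powerWeight (Icc 0 1) (1 / 2) ((β - 1) / 2)) := ⟨powerWeight_ne_zero hs hsc ha⟩
  refine ⟨inferInstance, ?_, iSup_hslope_unitStep_eq_top hsc hβ0, ?_⟩
  · rw [avgSlope_smul]
    exact ENNReal.mul_ne_top (ENNReal.inv_ne_top.2 (NeZero.ne _))
      (avgSlope_powerWeight_unitStep_ne_top hs hb hβ0.le (by linarith))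
  · rw [weakAvgSlope_smul, weakAvgSlope_powerWeight_unitStep_eq_top hs hsc ha (by linarith),
      ENNReal.mul_top (ENNReal.inv_ne_zero.2 (measure_ne_top _ _))]

end
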